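/- arXiv:1609.04943 — 2 statements merged into one kernel-verified Lean document; each statement's English description precedes it below -/
import Mathlib

section
/- Let (Ω,Σ,μ) be a probability space and φ : Ω → Ω a measure-preserving measurable transformation with Perron–Frobenius operator P on L¹(Ω,Σ,μ). Assume that every B ∈ Σ_∞ satisfies μ(B Δ φ⁻¹(B)) = 0. Then for every f ∈ L¹(Ω,Σ,μ) the sequence (Pⁿf) converges in L¹-norm to the conditional expectation E(f | Σ_inv). -/
/-!
Since `φ` preserves `μ`, the defining property of `P` says that `Pⁿf ∘ φⁿ = E(f | φ⁻ⁿΣ)`, so that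
`‖Pⁿf - E(f | Σ_inv)‖₁ = ‖E(f | φ⁻ⁿΣ) - E(f | Σ_inv)‖₁`, because `E(f | Σ_inv)` is `φ`-invariant.
The σ-algebras `φ⁻ⁿΣ` decrease to `Σ_∞`, hence `E(f | φ⁻ⁿΣ) → E(f | Σ_∞)` in `L¹`: on `L²` this is
the convergence of orthogonal projections onto a decreasing sequence of closed subspaces, and it
extends to `L¹` by density, conditional expectations being `L¹`-contractions. Finally, every set of
`Σ_∞` is almost invariant, hence a.e. equal to an invariant set, so `E(f | Σ_∞) = E(f | Σ_inv)`.
-/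

open MeasureTheory Filter Set Topology
open scoped symmDiff ENNReal

/-- The σ-algebra of `φ`-invariant measurable sets. -/
def invAlg {Ω : Type*} (m : MeasurableSpace Ω) (φ : Ω → Ω) : MeasurableSpace Ω where
  MeasurableSet' A := m.MeasurableSet' A ∧ φ ⁻¹' A = A
  measurableSet_empty := ⟨m.measurableSet_empty, rfl⟩
  measurableSet_compl A hA := ⟨m.measurableSet_compl A hA.1, by
    rw [Set.preimage_compl, hA.2]⟩
  measurableSet_iUnion s hs := ⟨m.measurableSet_iUnion s fun i => (hs i).1, by
    simp only [Set.preimage_iUnion]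
    exact Set.iUnion_congr fun i => (hs i).2⟩

section OrthogonalProjection

variable {𝕜 H ι : Type*} [RCLike 𝕜] [NormedAddCommGroup H] [InnerProductSpace 𝕜 H]
  [CompleteSpace H] [Preorder ι]

theorem starProjection_tendsto_iInf (U : ι → Submodule 𝕜 H) [∀ i, (U i).HasOrthogonalProjection]
    [(⨅ i, U i).HasOrthogonalProjection] (hU : Antitone U) (x : H) :
    Tendsto (fun i ↦ (U i).starProjection x) atTop (𝓝 ((⨅ i, U i).starProjection x)) := by
  have closure_eq : (⨆ i, (U i)ᗮ).topologicalClosure = (⨅ i, U i)ᗮ := by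
    simp only [← Submodule.orthogonal_orthogonal_eq_closure, ← Submodule.iInf_orthogonal,
      Submodule.orthogonal_orthogonal]
  have tendsto_orthogonal := Submodule.starProjection_tendsto_closure_iSup (fun i ↦ (U i)ᗮ)
    (fun _ _ hij ↦ Submodule.orthogonal_le (hU hij)) x
  simp only [closure_eq, Submodule.starProjection_orthogonal'] at tendsto_orthogonal
  simpa using (tendsto_const_nhds (x := x)).sub tendsto_orthogonal

end OrthogonalProjection

section Measurability

variable {Ω E : Type*}

theorem stronglyMeasurable_iInf {ι : Type*} [Nonempty ι] [TopologicalSpace E]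
    [TopologicalSpace.PseudoMetrizableSpace E] {ℱ : ι → MeasurableSpace Ω} {f : Ω → E}
    (hf : ∀ i, StronglyMeasurable[ℱ i] f) : StronglyMeasurable[⨅ i, ℱ i] f := by
  borelize E
  refine (stronglyMeasurable_iff_measurable_separable (m := ⨅ i, ℱ i)).2 ⟨?_, ?_⟩
  · exact fun s hs ↦ MeasurableSpace.measurableSet_iInf.2 fun i ↦ (hf i).measurable hs
  · exact (hf (Classical.arbitrary ι)).isSeparable_range

theorem limUnder_nat_add [TopologicalSpace E] [Nonempty E] (u : ℕ → E) (k : ℕ) :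
    limUnder atTop (fun n ↦ u (n + k)) = limUnder atTop u := by
  rw [limUnder, limUnder, ← Function.comp_def u, ← map_map, map_add_atTop_eq_nat]

theorem aestronglyMeasurable_iInf_of_antitone [Nonempty E] [TopologicalSpace E]
    [TopologicalSpace.IsCompletelyMetrizableSpace E] {m : MeasurableSpace Ω} {μ : Measure Ω}
    {ℱ : ℕ → MeasurableSpace Ω} (hℱ : Antitone ℱ) {f : Ω → E}
    (hf : ∀ n, AEStronglyMeasurable[ℱ n] f μ) : AEStronglyMeasurable[⨅ n, ℱ n] f μ := by
  choose g hg hfg using hf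
  refine ⟨fun x ↦ limUnder atTop (g · x), stronglyMeasurable_iInf fun k ↦ ?_, ?_⟩
  · simp only [← limUnder_nat_add (fun n ↦ g n _) k]
    exact @StronglyMeasurable.limUnder _ _ _ (ℱ k) _ _ _ _ _ _ _ fun n ↦
      (hg (n + k)).mono (hℱ (Nat.le_add_left k n))
  · filter_upwards [ae_all_iff.2 hfg] with x hx
    simp only [← hx, tendsto_const_nhds.limUnder_eq]

theorem lpMeas_iInf_of_antitone (𝕜 : Type*) [RCLike 𝕜] [NormedAddCommGroup E] [NormedSpace 𝕜 E]
    [CompleteSpace E] {m : MeasurableSpace Ω} {μ : Measure Ω} {ℱ : ℕ → MeasurableSpace Ω}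
    (hℱ : Antitone ℱ) (p : ℝ≥0∞) :
    lpMeas E 𝕜 (⨅ n, ℱ n) p μ = ⨅ n, lpMeas E 𝕜 (ℱ n) p μ := by
  ext f
  simp only [Submodule.mem_iInf, mem_lpMeas_iff_aestronglyMeasurable]
  exact ⟨fun hf n ↦ hf.mono (iInf_le ℱ n), aestronglyMeasurable_iInf_of_antitone hℱ⟩

end Measurability

theorem tendsto_eLpNorm_of_exponent_le {Ω E ι : Type*} [NormedAddCommGroup E]
    {m : MeasurableSpace Ω} {μ : Measure Ω} [IsFiniteMeasure μ] {l : Filter ι} {g : ι → Ω → E}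
    {p q : ℝ≥0∞} (hpq : p ≤ q) (hg : ∀ i, AEStronglyMeasurable (g i) μ)
    (h : Tendsto (fun i ↦ eLpNorm (g i) q μ) l (𝓝 0)) :
    Tendsto (fun i ↦ eLpNorm (g i) p μ) l (𝓝 0) := by
  rcases eq_or_ne μ 0 with rfl | hμ
  · simpa using tendsto_const_nhds
  have rpow_ne_top : μ univ ^ (1 / p.toReal - 1 / q.toReal) ≠ ∞ :=
    ENNReal.rpow_ne_top_of_ne_zero (Measure.measure_univ_ne_zero.2 hμ) (measure_ne_top μ univ)
  exact tendsto_of_tendsto_of_tendsto_of_le_of_le tendsto_const_nhds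
    (by simpa using ENNReal.Tendsto.mul_const h (.inr rpow_ne_top)) (fun _ ↦ zero_le)
    fun i ↦ eLpNorm_le_eLpNorm_mul_rpow_measure_univ hpq (hg i)

section CondExp

variable {Ω E F : Type*} {m : MeasurableSpace Ω} {μ : Measure Ω}
  [NormedAddCommGroup E] [NormedSpace ℝ E] [CompleteSpace E]
  [NormedAddCommGroup F] [NormedSpace ℝ F] [CompleteSpace F]

theorem condExp_ae_eq_condExp_of_forall_exists_ae_eq {m₁ m₂ : MeasurableSpace Ω} (h₁₂ : m₁ ≤ m₂)
    (h₂ : m₂ ≤ m) [SigmaFinite (μ.trim (h₁₂.trans h₂))] {f : Ω → E} (hf : Integrable f μ)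
    (h : ∀ s, MeasurableSet[m₂] s → ∃ t, MeasurableSet[m₁] t ∧ t =ᵐ[μ] s) :
    μ[f | m₂] =ᵐ[μ] μ[f | m₁] := by
  have : SigmaFinite (μ.trim h₂) := sigmaFiniteTrim_mono h₂ h₁₂
  refine (ae_eq_condExp_of_forall_setIntegral_eq h₂ hf
    (fun _ _ _ ↦ integrable_condExp.integrableOn) (fun s hs _ ↦ ?_)
    (stronglyMeasurable_condExp.mono h₁₂).aestronglyMeasurable).symm
  obtain ⟨t, ht, hts⟩ := h s hs
  calc ∫ x in s, (μ[f | m₁]) x ∂μ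
      = ∫ x in t, (μ[f | m₁]) x ∂μ := setIntegral_congr_set hts.symm
    _ = ∫ x in t, f x ∂μ := setIntegral_condExp (h₁₂.trans h₂) hf ht
    _ = ∫ x in s, f x ∂μ := setIntegral_congr_set hts

theorem condExpL1CLM_ae_eq_condExp {m' : MeasurableSpace Ω} (hm' : m' ≤ m)
    [SigmaFinite (μ.trim hm')] (f : Lp E 1 μ) : condExpL1CLM E hm' μ f =ᵐ[μ] μ[f | m'] := by
  simpa using (condExp_ae_eq_condExpL1CLM hm' (L1.integrable_coeFn f)).symm

theorem lipschitzWith_condExpL1CLM {m' : MeasurableSpace Ω} (hm' : m' ≤ m)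
    [SigmaFinite (μ.trim hm')] : LipschitzWith 1 (condExpL1CLM E hm' μ) := by
  refine AddMonoidHomClass.lipschitz_of_bound_nnnorm _ 1 fun f ↦ ?_
  rw [one_mul, ← ENNReal.coe_le_coe, ← enorm_eq_nnnorm, ← enorm_eq_nnnorm, Lp.enorm_def,
    Lp.enorm_def, eLpNorm_congr_ae (condExpL1CLM_ae_eq_condExp hm' f)]
  exact eLpNorm_condExp_le_eLpNorm f le_rfl

section Tendsto

variable {ι : Type*} {l : Filter ι} {ℱ : ι → MeasurableSpace Ω} {m' : MeasurableSpace Ω}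

theorem isClosed_setOf_tendsto_eLpNorm_condExp [IsFiniteMeasure μ] (hℱ : ∀ i, ℱ i ≤ m)
    (hm' : m' ≤ m) :
    IsClosed {f : Lp E 1 μ | Tendsto (fun i ↦ eLpNorm (μ[f | ℱ i] - μ[f | m']) 1 μ) l (𝓝 0)} := by
  have equicontinuous : Equicontinuous fun i ↦ ⇑(condExpL1CLM E (hℱ i) μ) :=
    (LipschitzWith.uniformEquicontinuous _ 1
      fun i ↦ lipschitzWith_condExpL1CLM (hℱ i)).equicontinuous
  convert! equicontinuous.isClosed_setOfPred_tendsto (l := l) (condExpL1CLM E hm' μ).continuous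
    using 3 with f
  rw [Lp.tendsto_Lp_iff_tendsto_eLpNorm']
  simp only [eLpNorm_congr_ae
    ((condExpL1CLM_ae_eq_condExp (hℱ _) f).sub (condExpL1CLM_ae_eq_condExp hm' f))]

theorem tendsto_eLpNorm_condExp_add {p : ℝ≥0∞} (hp : 1 ≤ p) {f g : Ω → E} (hf : Integrable f μ)
    (hg : Integrable g μ)
    (hf_tendsto : Tendsto (fun i ↦ eLpNorm (μ[f | ℱ i] - μ[f | m']) p μ) l (𝓝 0))
    (hg_tendsto : Tendsto (fun i ↦ eLpNorm (μ[g | ℱ i] - μ[g | m']) p μ) l (𝓝 0)) :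
    Tendsto (fun i ↦ eLpNorm (μ[f + g | ℱ i] - μ[f + g | m']) p μ) l (𝓝 0) := by
  refine tendsto_of_tendsto_of_tendsto_of_le_of_le tendsto_const_nhds
    (by simpa using hf_tendsto.add hg_tendsto) (fun _ ↦ zero_le) fun i ↦ ?_
  calc eLpNorm (μ[f + g | ℱ i] - μ[f + g | m']) p μ
      = eLpNorm ((μ[f | ℱ i] + μ[g | ℱ i]) - (μ[f | m'] + μ[g | m'])) p μ :=
        eLpNorm_congr_ae ((condExp_add hf hg _).sub (condExp_add hf hg _))
    _ = eLpNorm ((μ[f | ℱ i] - μ[f | m']) + (μ[g | ℱ i] - μ[g | m'])) p μ := by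
        rw [add_sub_add_comm]
    _ ≤ eLpNorm (μ[f | ℱ i] - μ[f | m']) p μ + eLpNorm (μ[g | ℱ i] - μ[g | m']) p μ :=
        eLpNorm_add_le (integrable_condExp.sub integrable_condExp).aestronglyMeasurable
          (integrable_condExp.sub integrable_condExp).aestronglyMeasurable hp

theorem tendsto_eLpNorm_condExp_continuousLinearMap_comp {p : ℝ≥0∞} {f : Ω → E}
    (hf : Integrable f μ) (T : E →L[ℝ] F)
    (h : Tendsto (fun i ↦ eLpNorm (μ[f | ℱ i] - μ[f | m']) p μ) l (𝓝 0)) :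
    Tendsto (fun i ↦ eLpNorm (μ[T ∘ f | ℱ i] - μ[T ∘ f | m']) p μ) l (𝓝 0) := by
  have tendsto_mul : Tendsto (fun i ↦ ‖T‖ₑ * eLpNorm (μ[f | ℱ i] - μ[f | m']) p μ) l (𝓝 0) := by
    simpa using ENNReal.Tendsto.const_mul h (.inr enorm_ne_top)
  refine tendsto_of_tendsto_of_tendsto_of_le_of_le tendsto_const_nhds tendsto_mul
    (fun _ ↦ zero_le) fun i ↦ ?_
  refine eLpNorm_le_mul_eLpNorm_of_ae_le_mul' ?_ p
  filter_upwards [T.comp_condExp_comm (m := ℱ i) hf, T.comp_condExp_comm (m := m') hf] with x hx hx'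
  rw [Pi.sub_apply, ← hx, ← hx', Function.comp_apply, Function.comp_apply, ← map_sub]
  exact T.le_opENorm _

end Tendsto

section ReverseMartingale

variable [IsFiniteMeasure μ] {ℱ : ℕ → MeasurableSpace Ω}

theorem tendsto_eLpNorm_two_condExp_iInf {H : Type*} [NormedAddCommGroup H]
    [InnerProductSpace ℝ H] [CompleteSpace H] (hle : ∀ n, ℱ n ≤ m) (hℱ : Antitone ℱ) {f : Ω → H}
    (hf : MemLp f 2 μ) :
    Tendsto (fun n ↦ eLpNorm (μ[f | ℱ n] - μ[f | ⨅ n, ℱ n]) 2 μ) atTop (𝓝 0) := by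
  have hinf : ⨅ n, ℱ n ≤ m := (iInf_le ℱ 0).trans (hle 0)
  have (n : ℕ) : Fact (ℱ n ≤ m) := ⟨hle n⟩
  have : Fact (⨅ n, ℱ n ≤ m) := ⟨hinf⟩
  have lpMeas_iInf := lpMeas_iInf_of_antitone (E := H) (μ := μ) ℝ hℱ 2
  have : (⨅ n, lpMeas H ℝ (ℱ n) 2 μ).HasOrthogonalProjection := lpMeas_iInf ▸ inferInstance
  have antitone_lpMeas : Antitone fun n ↦ lpMeas H ℝ (ℱ n) 2 μ := fun _ _ hij _ hg ↦
    mem_lpMeas_iff_aestronglyMeasurable.2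
      ((mem_lpMeas_iff_aestronglyMeasurable.1 hg).mono (hℱ hij))
  have tendsto_proj := starProjection_tendsto_iInf _ antitone_lpMeas (hf.toLp f)
  simp only [← lpMeas_iInf] at tendsto_proj
  rw [Lp.tendsto_Lp_iff_tendsto_eLpNorm'] at tendsto_proj
  exact tendsto_proj.congr fun n ↦ eLpNorm_congr_ae <|
    (hf.condExpL2_ae_eq_condExp (𝕜 := ℝ) (hle n)).sub (hf.condExpL2_ae_eq_condExp (𝕜 := ℝ) hinf)

theorem tendsto_eLpNorm_condExp_iInf_indicator_const (hle : ∀ n, ℱ n ≤ m) (hℱ : Antitone ℱ)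
    {s : Set Ω} (hs : MeasurableSet s) (c : E) :
    Tendsto (fun n ↦
        eLpNorm (μ[s.indicator fun _ ↦ c | ℱ n] - μ[s.indicator fun _ ↦ c | ⨅ n, ℱ n]) 1 μ)
      atTop (𝓝 0) := by
  set χ : Ω → ℝ := s.indicator 1
  have memLp_χ (p : ℝ≥0∞) : MemLp χ p μ := memLp_indicator_const p hs 1 (.inr (measure_ne_top μ s))
  have indicator_eq : (s.indicator fun _ ↦ c) = ContinuousLinearMap.toSpanSingleton ℝ c ∘ χ := by
    ext x
    by_cases hx : x ∈ s <;> simp [χ, hx]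
  rw [indicator_eq]
  exact tendsto_eLpNorm_condExp_continuousLinearMap_comp ((memLp_χ 1).integrable le_rfl) _
    (tendsto_eLpNorm_of_exponent_le one_le_two
      (fun _ ↦ (integrable_condExp.sub integrable_condExp).aestronglyMeasurable)
      (tendsto_eLpNorm_two_condExp_iInf hle hℱ (memLp_χ 2)))

theorem tendsto_eLpNorm_condExp_iInf (hle : ∀ n, ℱ n ≤ m) (hℱ : Antitone ℱ) {f : Ω → E}
    (hf : Integrable f μ) :
    Tendsto (fun n ↦ eLpNorm (μ[f | ℱ n] - μ[f | ⨅ n, ℱ n]) 1 μ) atTop (𝓝 0) := by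
  refine Integrable.induction
    (fun f ↦ Tendsto (fun n ↦ eLpNorm (μ[f | ℱ n] - μ[f | ⨅ n, ℱ n]) 1 μ) atTop (𝓝 0))
    ?indicator ?add ?closed ?congr hf
  case indicator => exact fun c s hs _ ↦ tendsto_eLpNorm_condExp_iInf_indicator_const hle hℱ hs c
  case add => exact fun f g _ hf hg ↦ tendsto_eLpNorm_condExp_add le_rfl hf hg
  case closed => exact isClosed_setOf_tendsto_eLpNorm_condExp hle ((iInf_le ℱ 0).trans (hle 0))
  case congr =>
    exact fun f g hfg _ hf ↦ hf.congr fun n ↦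
      eLpNorm_congr_ae ((condExp_congr_ae hfg).sub (condExp_congr_ae hfg))

end ReverseMartingale

end CondExp

section InvariantSets

variable {Ω E : Type*} [m : MeasurableSpace Ω] {μ : Measure Ω} {φ : Ω → Ω}

/-- The σ-algebra `Σ_∞ = ⋂ₙ φ⁻ⁿ(Σ)` of a self-map `φ`. -/
abbrev tailAlg (φ : Ω → Ω) : MeasurableSpace Ω := ⨅ n : ℕ, m.comap φ^[n]

theorem measurableSet_tailAlg {B : Set Ω} :
    MeasurableSet[tailAlg φ] B ↔ ∀ n : ℕ, ∃ A, MeasurableSet A ∧ B = φ^[n] ⁻¹' A := by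
  simp only [MeasurableSpace.measurableSet_iInf, MeasurableSpace.measurableSet_comap, eq_comm]

theorem tailAlg_le : tailAlg φ ≤ m :=
  (iInf_le _ 0).trans MeasurableSpace.comap_id.le

theorem antitone_comap_iterate (hφ : Measurable φ) : Antitone fun n : ℕ ↦ m.comap φ^[n] := by
  refine antitone_nat_of_succ_le fun n ↦ ?_
  rw [Function.iterate_succ', ← MeasurableSpace.comap_comp]
  exact MeasurableSpace.comap_mono hφ.comap_le

theorem invAlg_eq_invariants : invAlg m φ = MeasurableSpace.invariants φ := rfl

theorem invAlg_le_tailAlg : invAlg m φ ≤ tailAlg φ := fun A hA ↦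
  measurableSet_tailAlg.2 fun n ↦
    ⟨A, hA.1, (MeasurableSpace.le_invariants_iterate φ n A hA).2.symm⟩

theorem comp_iterate_eq_of_stronglyMeasurable_invAlg [TopologicalSpace E]
    [TopologicalSpace.MetrizableSpace E] {g : Ω → E} (hg : StronglyMeasurable[invAlg m φ] g)
    (n : ℕ) : g ∘ φ^[n] = g := by
  borelize E
  rw [invAlg_eq_invariants] at hg
  exact MeasurableSpace.comp_eq_of_measurable_invariants
    (hg.measurable.mono (MeasurableSpace.le_invariants_iterate φ n) le_rfl)

theorem condExp_tailAlg_ae_eq_condExp_invAlg [NormedAddCommGroup E] [NormedSpace ℝ E]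
    [CompleteSpace E] [IsFiniteMeasure μ] (hφ : Measure.QuasiMeasurePreserving φ μ μ)
    (htail : ∀ B, MeasurableSet[tailAlg φ] B → φ ⁻¹' B =ᵐ[μ] B) {f : Ω → E}
    (hf : Integrable f μ) : μ[f | tailAlg φ] =ᵐ[μ] μ[f | invAlg m φ] := by
  refine condExp_ae_eq_condExp_of_forall_exists_ae_eq invAlg_le_tailAlg tailAlg_le hf fun B hB ↦ ?_
  obtain ⟨A, hA, hAB, hA_inv⟩ :=
    hφ.exists_preimage_eq_of_preimage_ae (tailAlg_le B hB).nullMeasurableSet (htail B hB)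
  exact ⟨A, ⟨hA, hA_inv⟩, hAB⟩

end InvariantSets

section PerronFrobenius

variable {Ω E : Type*} [m : MeasurableSpace Ω] {μ : Measure Ω} {φ : Ω → Ω}
  [NormedAddCommGroup E] [NormedSpace ℝ E] {P : Lp E 1 μ →L[ℝ] Lp E 1 μ}

/-- `P` is the Perron–Frobenius operator of `φ` on `L¹(μ; E)`: integrating `P f` over a measurable
set amounts to integrating `f` over its preimage. -/
def IsPerronFrobenius (φ : Ω → Ω) (P : Lp E 1 μ →L[ℝ] Lp E 1 μ) : Prop :=
  ∀ (f : Lp E 1 μ) (A : Set Ω), MeasurableSet A →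
    ∫ x in A, (P f) x ∂μ = ∫ x in φ ⁻¹' A, f x ∂μ

namespace IsPerronFrobenius

theorem pow (hP : IsPerronFrobenius φ P) (hφ : Measurable φ) (n : ℕ) :
    IsPerronFrobenius φ^[n] (P ^ n) := by
  induction n with
  | zero => exact fun _ _ _ ↦ rfl
  | succ n ih =>
    intro f A hA
    rw [pow_succ, mul_apply_eq_comp, ih _ A hA, hP _ _ (hφ.iterate n hA),
      Function.iterate_succ, preimage_comp]

theorem comp_ae_eq_condExp [CompleteSpace E] (hP : IsPerronFrobenius φ P)
    (hφ : MeasurePreserving φ μ μ) [SigmaFinite (μ.trim hφ.measurable.comap_le)] (f : Lp E 1 μ) :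
    P f ∘ φ =ᵐ[μ] μ[f | m.comap φ] := by
  have integrable_comp : Integrable (P f ∘ φ) μ := hφ.integrable_comp_of_integrable
    (L1.integrable_coeFn (P f))
  refine ae_eq_condExp_of_forall_setIntegral_eq hφ.measurable.comap_le (L1.integrable_coeFn f)
    (fun _ _ _ ↦ integrable_comp.integrableOn) ?_ ?_
  · rintro _ ⟨A, hA, rfl⟩ -
    calc ∫ x in φ ⁻¹' A, P f (φ x) ∂μ
        = ∫ y in A, P f y ∂μ.map φ :=
          (setIntegral_map hA (Lp.stronglyMeasurable _).aestronglyMeasurable hφ.aemeasurable).symm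
      _ = ∫ y in A, P f y ∂μ := by rw [hφ.map_eq]
      _ = ∫ x in φ ⁻¹' A, f x ∂μ := hP f A hA
  · exact ((Lp.stronglyMeasurable (P f)).comp_measurable
      (comap_measurable φ)).aestronglyMeasurable

end IsPerronFrobenius

theorem stmt1_general [CompleteSpace E] [IsFiniteMeasure μ] (hφ : MeasurePreserving φ μ μ)
    (hP : IsPerronFrobenius φ P) (htail : ∀ B, MeasurableSet[tailAlg φ] B → φ ⁻¹' B =ᵐ[μ] B)
    (f : Lp E 1 μ) :
    Tendsto (fun n : ℕ ↦ eLpNorm (((P ^ n) f : Ω → E) - μ[f | invAlg m φ]) 1 μ) atTop (𝓝 0) := by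
  have hf := L1.integrable_coeFn f
  have condExp_tail := condExp_tailAlg_ae_eq_condExp_invAlg hφ.quasiMeasurePreserving htail hf
  refine (tendsto_eLpNorm_condExp_iInf (fun n ↦ (hφ.iterate n).measurable.comap_le)
    (antitone_comap_iterate hφ.measurable) hf).congr fun n ↦ ?_
  have condExp_inv_comp : μ[f | invAlg m φ] ∘ φ^[n] = μ[f | invAlg m φ] :=
    comp_iterate_eq_of_stronglyMeasurable_invAlg stronglyMeasurable_condExp n
  have pow_comp : (P ^ n) f ∘ φ^[n] =ᵐ[μ] μ[f | m.comap φ^[n]] :=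
    (hP.pow hφ.measurable n).comp_ae_eq_condExp (hφ.iterate n) f
  calc eLpNorm (μ[f | m.comap φ^[n]] - μ[f | tailAlg φ]) 1 μ
      = eLpNorm (((P ^ n) f ∘ φ^[n] : Ω → E) - (μ[f | invAlg m φ] ∘ φ^[n])) 1 μ := by
        rw [condExp_inv_comp]
        exact eLpNorm_congr_ae (pow_comp.symm.sub condExp_tail)
    _ = eLpNorm (((P ^ n) f : Ω → E) - μ[f | invAlg m φ]) 1 μ :=
        eLpNorm_comp_measurePreserving ((Lp.aestronglyMeasurable _).sub
          integrable_condExp.aestronglyMeasurable) (hφ.iterate n)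

end PerronFrobenius

theorem stmt1 {Ω : Type*} [m : MeasurableSpace Ω] (μ : Measure Ω) [IsProbabilityMeasure μ]
    (φ : Ω → Ω) (hmp : MeasurePreserving φ μ μ)
    (P : Lp ℝ 1 μ →L[ℝ] Lp ℝ 1 μ)
    (hP : ∀ (f : Lp ℝ 1 μ) (A : Set Ω), MeasurableSet A →
      ∫ x in A, (P f) x ∂μ = ∫ x in φ ⁻¹' A, f x ∂μ)
    (hinf : ∀ B : Set Ω, (∀ n : ℕ, ∃ A : Set Ω, MeasurableSet A ∧ B = φ^[n] ⁻¹' A) →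
      μ (B ∆ (φ ⁻¹' B)) = 0)
    (f : Lp ℝ 1 μ) :
    Tendsto (fun n : ℕ => eLpNorm (((P ^ n) f : Ω → ℝ) - μ[(f : Ω → ℝ)|invAlg m φ]) 1 μ)
      atTop (𝓝 0) :=
  stmt1_general hmp hP (fun B hB ↦
    (measure_symmDiff_eq_zero_iff.1 (hinf B (measurableSet_tailAlg.1 hB))).symm) f
end

section
/- Let (Ω,Σ,μ) be a probability space and φ : Ω → Ω a bimeasurable measure-preserving transformation. Then the following are equivalent: (i) for every A ∈ Σ with μ(A) > 0 one has lim_{n→∞} μ(φⁿ(A)) = 1 (i.e., the system is exact); (ii) for every A ∈ Σ one has lim_{n→∞} sup_{B∈Σ} | μ(φⁿ(A) ∩ B) − (lim_{m→∞} μ(φᵐ(A)))·μ(B) | = 0. -/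
open MeasureTheory Filter Set Topology
open scoped symmDiff ENNReal

/-!
For `0 ≤ a ≤ 1`, splitting `B` along `S` writes `μ(S ∩ B) - a μ(B)` as
`(1 - a) μ(S ∩ B) - a μ(Sᶜ ∩ B)`, a difference of two nonnegative terms that are largest at `B = S`
and `B = Sᶜ` respectively. Its absolute value therefore has supremum
`max ((1 - a) μ(S)) (a μ(Sᶜ))`, which tends to `a (1 - a)` as `μ(S)` tends to `a`. Hence the uniform
mixing condition says precisely that each limit `a` of `μ(φⁿ(A))` is `0` or `1`, and the value `0`
is excluded for sets of positive measure because `μ(A) ≤ μ(φⁿ(A))`.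
-/

section MixingDefect

variable {Ω : Type*} [MeasurableSpace Ω] {μ : Measure Ω} {S : Set Ω} {a : ℝ}

/-- The mixing defect `sup_B |μ(S ∩ B) - a μ(B)|` of a set `S` relative to a density `a`, where `B`
ranges over all measurable sets: the uniform distance from the restriction of `μ` to `S` to `a μ`.
The supremum is taken in `ℝ`, so it has the junk value `0` if the set of values is unbounded; for a
finite measure this does not happen. -/
noncomputable def mixingDefect (μ : Measure Ω) (a : ℝ) (S : Set Ω) : ℝ :=
  ⨆ B : {B : Set Ω // MeasurableSet B}, |μ.real (S ∩ B) - a * μ.real B|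

lemma measureReal_inter_sub_mul [IsFiniteMeasure μ] (hS : MeasurableSet S) (a : ℝ) (B : Set Ω) :
    μ.real (S ∩ B) - a * μ.real B = (1 - a) * μ.real (S ∩ B) - a * μ.real (Sᶜ ∩ B) := by
  have hsplit : μ.real (S ∩ B) + μ.real (Sᶜ ∩ B) = μ.real B := by
    simpa only [inter_comm, sdiff_eq] using measureReal_inter_add_sdiff (μ := μ) (s := B) hS
  rw [← hsplit]
  ring

lemma abs_measureReal_inter_sub_mul_le [IsFiniteMeasure μ] (hS : MeasurableSet S)
    (ha₀ : 0 ≤ a) (ha₁ : a ≤ 1) (B : Set Ω) :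
    |μ.real (S ∩ B) - a * μ.real B| ≤ max ((1 - a) * μ.real S) (a * μ.real Sᶜ) := by
  have h_one_sub : 0 ≤ 1 - a := sub_nonneg.2 ha₁
  rw [measureReal_inter_sub_mul hS, abs_sub_le_iff]
  constructor
  · calc (1 - a) * μ.real (S ∩ B) - a * μ.real (Sᶜ ∩ B)
        ≤ (1 - a) * μ.real (S ∩ B) := sub_le_self _ (by positivity)
      _ ≤ (1 - a) * μ.real S :=
        mul_le_mul_of_nonneg_left (measureReal_mono inter_subset_left) h_one_sub
      _ ≤ _ := le_max_left _ _
  · calc a * μ.real (Sᶜ ∩ B) - (1 - a) * μ.real (S ∩ B)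
        ≤ a * μ.real (Sᶜ ∩ B) := sub_le_self _ (by positivity)
      _ ≤ a * μ.real Sᶜ := mul_le_mul_of_nonneg_left (measureReal_mono inter_subset_left) ha₀
      _ ≤ _ := le_max_right _ _

lemma mixingDefect_eq_max [IsFiniteMeasure μ] (hS : MeasurableSet S) (ha₀ : 0 ≤ a) (ha₁ : a ≤ 1) :
    mixingDefect μ a S = max ((1 - a) * μ.real S) (a * μ.real Sᶜ) := by
  have at_self : |μ.real (S ∩ S) - a * μ.real S| = (1 - a) * μ.real S := by
    rw [inter_self, ← one_sub_mul,
      abs_of_nonneg (mul_nonneg (sub_nonneg.2 ha₁) measureReal_nonneg)]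
  have at_compl : |μ.real (S ∩ Sᶜ) - a * μ.real Sᶜ| = a * μ.real Sᶜ := by
    rw [inter_compl_self, measureReal_empty, zero_sub, abs_neg,
      abs_of_nonneg (mul_nonneg ha₀ measureReal_nonneg)]
  refine IsGreatest.csSup_eq ⟨?_, ?_⟩
  · rcases max_choice ((1 - a) * μ.real S) (a * μ.real Sᶜ) with hmax | hmax <;> rw [hmax]
    · exact ⟨⟨S, hS⟩, at_self⟩
    · exact ⟨⟨Sᶜ, hS.compl⟩, at_compl⟩
  · rintro _ ⟨B, rfl⟩
    exact abs_measureReal_inter_sub_mul_le hS ha₀ ha₁ B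

lemma tendsto_mixingDefect_zero_iff [IsProbabilityMeasure μ] {ι : Type*} {l : Filter ι} [l.NeBot]
    {S : ι → Set Ω} (hS : ∀ i, MeasurableSet (S i))
    (ha : Tendsto (fun i => μ.real (S i)) l (𝓝 a)) :
    Tendsto (fun i => mixingDefect μ a (S i)) l (𝓝 0) ↔ a = 0 ∨ a = 1 := by
  have ha₀ : 0 ≤ a := ge_of_tendsto' ha fun _ => measureReal_nonneg
  have ha₁ : a ≤ 1 := le_of_tendsto' ha fun _ => measureReal_le_one
  have hlim : Tendsto (fun i => mixingDefect μ a (S i)) l (𝓝 (a * (1 - a))) := by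
    simp only [mixingDefect_eq_max (hS _) ha₀ ha₁, probReal_compl_eq_one_sub (hS _)]
    simpa only [mul_comm (1 - a) a, max_self] using
      (ha.const_mul (1 - a)).max ((ha.const_sub 1).const_mul a)
  calc Tendsto (fun i => mixingDefect μ a (S i)) l (𝓝 0)
      ↔ a * (1 - a) = 0 := ⟨tendsto_nhds_unique hlim, fun h => h ▸ hlim⟩
    _ ↔ a = 0 ∨ a = 1 := by rw [mul_eq_zero, sub_eq_zero, eq_comm (a := (1 : ℝ))]

end MixingDefect

section ImageIterate

variable {Ω : Type*} [MeasurableSpace Ω] {μ : Measure Ω} {φ : Ω → Ω} {A : Set Ω}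

lemma measurableSet_image_iterate (hbi : ∀ A : Set Ω, MeasurableSet A → MeasurableSet (φ '' A))
    (hA : MeasurableSet A) (n : ℕ) : MeasurableSet (φ^[n] '' A) := by
  rw [image_iterate_eq]
  exact Function.Iterate.rec MeasurableSet hA hbi n

lemma measure_le_measure_image_iterate (hmp : MeasurePreserving φ μ μ) (A : Set Ω) (n : ℕ) :
    μ A ≤ μ (φ^[n] '' A) := by
  simpa only [(hmp.iterate n).map_eq] using
    Measure.le_map_apply_image (μ := μ) (hmp.iterate n).measurable.aemeasurable A

lemma tendsto_measure_image_iterate_zero_or {c : ℝ≥0∞}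
    (hbi : ∀ A : Set Ω, MeasurableSet A → MeasurableSet (φ '' A))
    (h : ∀ A : Set Ω, MeasurableSet A → 0 < μ A →
      Tendsto (fun n : ℕ => μ (φ^[n] '' A)) atTop (𝓝 c))
    (hA : MeasurableSet A) :
    Tendsto (fun n : ℕ => μ (φ^[n] '' A)) atTop (𝓝 0) ∨
      Tendsto (fun n : ℕ => μ (φ^[n] '' A)) atTop (𝓝 c) := by
  by_cases hnull : ∀ n : ℕ, μ (φ^[n] '' A) = 0
  · exact .inl (by simp only [hnull, tendsto_const_nhds])
  · obtain ⟨N, hN⟩ := not_forall.1 hnull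
    refine .inr ((tendsto_add_atTop_iff_nat N).1 ?_)
    simpa only [Function.iterate_add, image_comp] using
      h _ (measurableSet_image_iterate hbi hA N) (pos_iff_ne_zero.2 hN)

end ImageIterate

theorem stmt7_general {Ω : Type*} [MeasurableSpace Ω] (μ : Measure Ω) [IsProbabilityMeasure μ]
    (φ : Ω → Ω) (hbi : ∀ A : Set Ω, MeasurableSet A → MeasurableSet (φ '' A))
    (hne : ∀ A : Set Ω, MeasurableSet A → 0 < μ A →
        ¬ Tendsto (fun n : ℕ => μ (φ^[n] '' A)) atTop (𝓝 0)) :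
    (∀ A : Set Ω, MeasurableSet A → 0 < μ A →
        Tendsto (fun n : ℕ => μ (φ^[n] '' A)) atTop (𝓝 1)) ↔
    (∀ A : Set Ω, MeasurableSet A → ∃ a : ℝ,
        Tendsto (fun k : ℕ => μ.real (φ^[k] '' A)) atTop (𝓝 a) ∧
        Tendsto (fun n : ℕ => mixingDefect μ a (φ^[n] '' A)) atTop (𝓝 0)) := by
  have toReal_iff (A : Set Ω) {c : ℝ≥0∞} (hc : c ≠ ∞) :
      Tendsto (fun n : ℕ => μ.real (φ^[n] '' A)) atTop (𝓝 c.toReal) ↔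
        Tendsto (fun n : ℕ => μ (φ^[n] '' A)) atTop (𝓝 c) :=
    ENNReal.tendsto_toReal_iff (fun _ => measure_ne_top _ _) hc
  constructor
  · intro hexact A hA
    obtain ⟨a, ha, ha_lim⟩ : ∃ a : ℝ, (a = 0 ∨ a = 1) ∧
        Tendsto (fun k : ℕ => μ.real (φ^[k] '' A)) atTop (𝓝 a) := by
      rcases tendsto_measure_image_iterate_zero_or hbi hexact hA with h0 | h1
      · exact ⟨0, .inl rfl, (toReal_iff A ENNReal.zero_ne_top).2 h0⟩
      · exact ⟨1, .inr rfl, (toReal_iff A ENNReal.one_ne_top).2 h1⟩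
    exact ⟨a, ha_lim,
      (tendsto_mixingDefect_zero_iff (measurableSet_image_iterate hbi hA) ha_lim).2 ha⟩
  · intro hmix A hA hpos
    obtain ⟨a, ha_lim, hdefect⟩ := hmix A hA
    rcases (tendsto_mixingDefect_zero_iff (measurableSet_image_iterate hbi hA) ha_lim).1 hdefect
      with rfl | rfl
    · exact absurd ((toReal_iff A ENNReal.zero_ne_top).1 ha_lim) (hne A hA hpos)
    · exact (toReal_iff A ENNReal.one_ne_top).1 ha_lim

theorem stmt7 {Ω : Type*} [m : MeasurableSpace Ω] (μ : Measure Ω) [IsProbabilityMeasure μ]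
    (φ : Ω → Ω) (hmp : MeasurePreserving φ μ μ)
    (hbi : ∀ A : Set Ω, MeasurableSet A → MeasurableSet (φ '' A)) :
    (∀ A : Set Ω, MeasurableSet A → 0 < μ A →
        Tendsto (fun n : ℕ => μ (φ^[n] '' A)) atTop (𝓝 1)) ↔
    (∀ A : Set Ω, MeasurableSet A → ∃ a : ℝ,
        Tendsto (fun k : ℕ => (μ (φ^[k] '' A)).toReal) atTop (𝓝 a) ∧
        Tendsto (fun n : ℕ => ⨆ B : {B : Set Ω // MeasurableSet B},
          |(μ ((φ^[n] '' A) ∩ (B : Set Ω))).toReal - a * (μ (B : Set Ω)).toReal|)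
          atTop (𝓝 0)) :=
  stmt7_general μ φ hbi fun A _ hpos h0 =>
    hpos.not_ge (ge_of_tendsto' h0 (measure_le_measure_image_iterate hmp A))
end
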